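/- Let c > 0 and set λ₊ = (1 + √(1+4c²))/2 and λ₋ = (1 - √(1+4c²))/2. Define x : ℝ² → ℝ³ by x(t,u) = (sinh t, e^{λ₊u} cosh t, e^{λ₋u} cosh t). Then x satisfies at every (t,u) ∈ ℝ²: ∂²x/∂t² = x; ∂²x/∂t∂u = tanh t · ∂x/∂u; and ∂²x/∂u² = -c² sinh t cosh t · ∂x/∂t + ∂x/∂u + c² cosh²t · x. -/

import Mathlib

/-! The coordinates of `x` are products of a hyperbolic function of `t` and an exponential in `u`,
so every partial derivative is explicit. The first two equations hold because `sinh` and `cosh` are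
each other's derivatives and `sinh = tanh * cosh`. In the third, the identity `cosh² - sinh² = 1`
reduces the second and third coordinates to the quadratic equation `lam² = lam + c²`, whose roots
are `lamP` and `lamM`; the first coordinate cancels identically. -/

noncomputable section
open Real

/-- Partial derivative in the first variable, for vector-valued functions of two reals. -/
def Pt {E : Type*} [NormedAddCommGroup E] [NormedSpace ℝ E]
    (g : ℝ → ℝ → E) : ℝ → ℝ → E := fun t u => deriv (fun s => g s u) t

/-- Partial derivative in the second variable, for vector-valued functions of two reals. -/
def Pu {E : Type*} [NormedAddCommGroup E] [NormedSpace ℝ E]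
    (g : ℝ → ℝ → E) : ℝ → ℝ → E := fun t u => deriv (fun s => g t s) u

/-- The surface `x(t,u) = (sinh t, e^{λ₊u} cosh t, e^{λ₋u} cosh t)` of Case (2.2) of
Theorem 6.2. -/
def xSurf (lamP lamM : ℝ) : ℝ → ℝ → (Fin 3 → ℝ) := fun t u =>
  ![Real.sinh t, Real.exp (lamP * u) * Real.cosh t, Real.exp (lamM * u) * Real.cosh t]

private lemma Pt_xSurf (a b : ℝ) : Pt (xSurf a b) =
    fun t u => ![cosh t, exp (a * u) * sinh t, exp (b * u) * sinh t] := by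
  funext t u
  refine HasDerivAt.deriv (hasDerivAt_pi.2 fun i => ?_)
  fin_cases i
  · exact hasDerivAt_sinh t
  · exact (hasDerivAt_cosh t).const_mul _
  · exact (hasDerivAt_cosh t).const_mul _

private lemma hasDerivAt_exp_lin (a u : ℝ) :
    HasDerivAt (fun s => exp (a * s)) (a * exp (a * u)) u := by
  simpa [mul_comm] using ((hasDerivAt_id u).const_mul a).exp

private lemma Pu_xSurf (a b : ℝ) : Pu (xSurf a b) =
    fun t u => ![0, a * exp (a * u) * cosh t, b * exp (b * u) * cosh t] := by
  funext t u
  refine HasDerivAt.deriv (hasDerivAt_pi.2 fun i => ?_)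
  fin_cases i
  · exact hasDerivAt_const u (sinh t)
  · exact (hasDerivAt_exp_lin a u).mul_const _
  · exact (hasDerivAt_exp_lin b u).mul_const _

private lemma Pt_Pt_xSurf (a b : ℝ) : Pt (Pt (xSurf a b)) = xSurf a b := by
  rw [Pt_xSurf]
  funext t u
  refine HasDerivAt.deriv (hasDerivAt_pi.2 fun i => ?_)
  fin_cases i
  · exact hasDerivAt_cosh t
  · exact (hasDerivAt_sinh t).const_mul _
  · exact (hasDerivAt_sinh t).const_mul _

private lemma Pt_Pu_xSurf (a b : ℝ) : Pt (Pu (xSurf a b)) =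
    fun t u => ![0, a * exp (a * u) * sinh t, b * exp (b * u) * sinh t] := by
  rw [Pu_xSurf]
  funext t u
  refine HasDerivAt.deriv (hasDerivAt_pi.2 fun i => ?_)
  fin_cases i
  · exact hasDerivAt_const t (0 : ℝ)
  · exact (hasDerivAt_cosh t).const_mul _
  · exact (hasDerivAt_cosh t).const_mul _

private lemma Pu_Pu_xSurf (a b : ℝ) : Pu (Pu (xSurf a b)) =
    fun t u => ![0, a * (a * exp (a * u)) * cosh t, b * (b * exp (b * u)) * cosh t] := by
  rw [Pu_xSurf]
  funext t u
  refine HasDerivAt.deriv (hasDerivAt_pi.2 fun i => ?_)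
  fin_cases i
  · exact hasDerivAt_const u (0 : ℝ)
  · exact ((hasDerivAt_exp_lin a u).const_mul a).mul_const _
  · exact ((hasDerivAt_exp_lin b u).const_mul b).mul_const _

/-- **Gauss equations (6.36)–(6.38).** For `c > 0` and
`λ± = (1 ± √(1+4c²))/2`, the surface `x` satisfies `x_{tt} = x`,
`x_{tu} = tanh t · x_u`, and
`x_{uu} = -c² sinh t cosh t · x_t + x_u + c² cosh²t · x`. -/
theorem stmt14 (c lamP lamM : ℝ) (hc : 0 < c)
    (hP : lamP = (1 + Real.sqrt (1 + 4*c^2)) / 2)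
    (hM : lamM = (1 - Real.sqrt (1 + 4*c^2)) / 2) :
    (∀ t u : ℝ, Pt (Pt (xSurf lamP lamM)) t u = xSurf lamP lamM t u) ∧
    (∀ t u : ℝ, Pt (Pu (xSurf lamP lamM)) t u
        = Real.tanh t • Pu (xSurf lamP lamM) t u) ∧
    (∀ t u : ℝ, Pu (Pu (xSurf lamP lamM)) t u
        = (-(c^2 * Real.sinh t * Real.cosh t)) • Pt (xSurf lamP lamM) t u
          + Pu (xSurf lamP lamM) t u
          + (c^2 * (Real.cosh t)^2) • xSurf lamP lamM t u) := by
  have hs : Real.sqrt (1 + 4*c^2) ^ 2 = 1 + 4*c^2 := Real.sq_sqrt (by positivity)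
  have hP2 : lamP ^ 2 = lamP + c ^ 2 := by rw [hP]; linear_combination hs / 4
  have hM2 : lamM ^ 2 = lamM + c ^ 2 := by rw [hM]; linear_combination hs / 4
  refine ⟨fun t u => by rw [Pt_Pt_xSurf], fun t u => ?_, fun t u => ?_⟩
  · have ht : Real.tanh t * Real.cosh t = Real.sinh t := by
      rw [Real.tanh_eq_sinh_div_cosh, div_mul_cancel₀ _ (Real.cosh_pos t).ne']
    rw [Pt_Pu_xSurf, Pu_xSurf]
    ext i
    fin_cases i
    · simp
    · simp
      linear_combination (-lamP * exp (lamP * u)) * ht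
    · simp
      linear_combination (-lamM * exp (lamM * u)) * ht
  · have hcs := Real.cosh_sq t
    rw [Pu_Pu_xSurf, Pt_xSurf, Pu_xSurf]
    ext i
    fin_cases i
    · simp [xSurf]
      ring
    · simp [xSurf]
      linear_combination exp (lamP * u) * cosh t * hP2 - c ^ 2 * exp (lamP * u) * cosh t * hcs
    · simp [xSurf]
      linear_combination exp (lamM * u) * cosh t * hM2 - c ^ 2 * exp (lamM * u) * cosh t * hcs
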